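/- Let (X, p_X) be a DMS on a finite alphabet. If a rate R is achievable with uniform compression codes, i.e., there exists a sequence of (2^{nR}, n, 2^{d_n}) uniform compression codes with lim sup (1/n) log M_n ≤ R, d_n/n → 0, P_e(φ_n, ψ_n) → 0, and U_e(φ_n) → 0, then R ≥ H(X). -/

import Mathlib

open Finset Filter Real

attribute [local instance] Classical.propDecidable

noncomputable section

/-- `p` is a probability mass function on the finite type `α`. -/
def IsPMF {α : Type*} [Fintype α] (p : α → ℝ) : Prop :=
  (∀ a, 0 ≤ p a) ∧ ∑ a, p a = 1

/-- i.i.d. (product) distribution of `n` copies of a source with pmf `p`. -/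
def iid {α : Type*} [Fintype α] (p : α → ℝ) (n : ℕ) : (Fin n → α) → ℝ :=
  fun x => ∏ i, p (x i)

/-- variational distance between two pmfs -/
def VD {α : Type*} [Fintype α] (p q : α → ℝ) : ℝ := ∑ a, |p a - q a|

/-- Shannon entropy, base 2 -/
def Hsh {α : Type*} [Fintype α] (p : α → ℝ) : ℝ := - ∑ a, p a * Real.logb 2 (p a)

/-- Rényi entropy of order 2, base 2 -/
def H2 {α : Type*} [Fintype α] (p : α → ℝ) : ℝ := - Real.logb 2 (∑ a, (p a) ^ 2)

/-- min-entropy, base 2 -/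
def Hinf {α : Type*} [Fintype α] (p : α → ℝ) : ℝ := - Real.logb 2 (⨆ a, p a)

/-- Kullback–Leibler divergence, base 2 -/
def KL {α : Type*} [Fintype α] (p q : α → ℝ) : ℝ := ∑ a, p a * Real.logb 2 (p a / q a)

/-- pushforward of a pmf along a map -/
def push {α β : Type*} [Fintype α] [Fintype β] (p : α → ℝ) (f : α → β) : β → ℝ :=
  fun b => ∑ a, if f a = b then p a else 0

/-- conditional mutual information `I(X;Y|Q)` of a joint pmf on `Q × X × Y`, base 2:
`I(X;Y|Q) = H(Q,X) + H(Q,Y) - H(Q) - H(Q,X,Y)`. -/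
def condMI {Q X Y : Type*} [Fintype Q] [Fintype X] [Fintype Y] (p : Q × X × Y → ℝ) : ℝ :=
  Hsh (fun qx : Q × X => ∑ y, p (qx.1, qx.2, y))
    + Hsh (fun qy : Q × Y => ∑ x, p (qy.1, x, qy.2))
    - Hsh (fun q : Q => ∑ x, ∑ y, p (q, x, y))
    - Hsh p

/-- the set of `ε`-letter-typical sequences of length `n` -/
def typ {α : Type*} [Fintype α] (p : α → ℝ) (n : ℕ) (ε : ℝ) : Finset (Fin n → α) :=
  Finset.univ.filter fun x =>
    ∀ a, |((Finset.univ.filter fun i => x i = a).card : ℝ) / n - p a| ≤ ε * p a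

/-- cumulative distribution function of the standard normal distribution -/
def stdΦ (x : ℝ) : ℝ := ∫ t in Set.Iic x, Real.exp (-(t ^ 2) / 2) / Real.sqrt (2 * Real.pi)

/-- `⌈2^r⌉₊`, the size of a message set `{1,…,2^r}` -/
def e2 (r : ℝ) : ℕ := ⌈(2:ℝ) ^ r⌉₊


/-!
By Gibbs' inequality, a source `P` of which a code with message set `B` recovers all but a mass `ε`
has entropy at most `1 + log |B| + ε log |A|`: compare `P` with the law putting half of its mass on
the at most `|B|` recoverable symbols and half on the others. Averaging over the seed changes
nothing, and for `n` i.i.d. letters dividing by `n` gives `H(X) - o(1) ≤ (log M_n) / n`.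

Real-valued `limsup` is a junk value on unbounded sequences, so `(log M_n) / n` has to be bounded.
Near-uniformity does this: the encoder reaches at most `|X|ⁿ 2 ^ d_n` messages, and a law that is
close to uniform on `M_n` messages cannot miss more than half of them.
-/

lemma sub_le_mul_log_div {x y : ℝ} (hx : 0 ≤ x) (hy : 0 ≤ y) (hxy : y = 0 → x = 0) :
    x - y ≤ x * log (x / y) := by
  rcases hy.eq_or_lt with rfl | hy
  · simp [hxy rfl]
  · have hkl : 0 ≤ y * InformationTheory.klFun (x / y) :=
      mul_nonneg hy.le (InformationTheory.klFun_nonneg (div_nonneg hx hy.le))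
    have hexpand : y * InformationTheory.klFun (x / y) = x * log (x / y) + y - x := by
      rw [InformationTheory.klFun]
      field_simp
    linarith

section Entropy

variable {α β : Type*} [Fintype α] [Fintype β] {p : α → ℝ}

lemma KL_nonneg {q : α → ℝ} (hp : ∀ a, 0 ≤ p a) (hq : ∀ a, 0 ≤ q a)
    (hpq : ∀ a, q a = 0 → p a = 0) (hsum : ∑ a, q a ≤ ∑ a, p a) : 0 ≤ KL p q := by
  have hlog : 0 ≤ ∑ a, p a * log (p a / q a) :=
    calc 0 ≤ ∑ a, (p a - q a) := by rw [sum_sub_distrib]; exact sub_nonneg.2 hsum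
      _ ≤ ∑ a, p a * log (p a / q a) :=
        sum_le_sum fun a _ ↦ sub_le_mul_log_div (hp a) (hq a) (hpq a)
  simp only [KL, logb, ← mul_div_assoc, ← sum_div]
  exact div_nonneg hlog (log_nonneg one_le_two)

lemma Hsh_add_KL {q : α → ℝ} (hpq : ∀ a, q a = 0 → p a = 0) :
    Hsh p + KL p q = -∑ a, p a * logb 2 (q a) := by
  rw [Hsh, KL, neg_add_eq_sub, ← sum_sub_distrib, ← sum_neg_distrib]
  refine sum_congr rfl fun a _ ↦ ?_
  rcases eq_or_ne (p a) 0 with hpa | hpa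
  · simp [hpa]
  · rw [logb_div hpa (mt (hpq a) hpa)]
    ring

lemma Hsh_eq_sum_negMulLog_div : Hsh p = (∑ a, negMulLog (p a)) / log 2 := by
  rw [Hsh, sum_div, ← sum_neg_distrib]
  refine sum_congr rfl fun a _ ↦ ?_
  rw [logb, negMulLog]
  ring

lemma Hsh_comp_equiv (e : β ≃ α) : Hsh (p ∘ e) = Hsh p := by
  simp only [Hsh, Function.comp_apply, e.sum_comp fun a ↦ p a * logb 2 (p a)]

lemma Hsh_prod_mul {q : β → ℝ} (hp : ∑ a, p a = 1) (hq : ∑ b, q b = 1) :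
    Hsh (fun x : α × β ↦ p x.1 * q x.2) = Hsh p + Hsh q := by
  simp only [Hsh_eq_sum_negMulLog_div, Fintype.sum_prod_type, negMulLog_mul, sum_add_distrib,
    ← sum_mul, ← mul_sum, hp, hq, one_mul, add_div]

lemma isPMF_uniform [Nonempty α] : IsPMF fun _ : α ↦ 1 / (Fintype.card α : ℝ) :=
  ⟨fun _ ↦ by positivity, by simp⟩

end Entropy

namespace IsPMF

variable {α : Type*} [Fintype α] {p : α → ℝ}

lemma nonempty (hp : IsPMF p) : Nonempty α := by
  by_contra hα
  rw [not_nonempty_iff] at hα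
  simpa using hp.2

lemma isPMF_iid (hp : IsPMF p) (n : ℕ) : IsPMF (iid p n) := by
  refine ⟨fun x ↦ prod_nonneg fun i _ ↦ hp.1 (x i), ?_⟩
  simp only [iid, ← Fintype.prod_sum, hp.2, prod_const_one]

lemma Hsh_iid (hp : IsPMF p) (n : ℕ) : Hsh (iid p n) = n * Hsh p := by
  induction n with
  | zero => simp [Hsh, iid]
  | succ n ih =>
    have hcons : iid p (n + 1) ∘ Fin.consEquiv (fun _ ↦ α) =
        fun x : α × (Fin n → α) ↦ p x.1 * iid p n x.2 := by
      ext x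
      simp [iid, Fin.consEquiv, Fin.prod_univ_succ]
    rw [← Hsh_comp_equiv (Fin.consEquiv fun _ ↦ α), hcons, Hsh_prod_mul hp.2 (hp.isPMF_iid n).2, ih]
    push_cast
    ring

lemma Hsh_le_sum_mul_logb (hp : IsPMF p) {c : α → ℝ} (hc : ∀ a, 0 < c a)
    (hsum : ∑ a, (c a)⁻¹ ≤ 1) : Hsh p ≤ ∑ a, p a * logb 2 (c a) := by
  have hc_inv (a : α) : (c a)⁻¹ = 0 → p a = 0 := fun h ↦ absurd h (inv_ne_zero (hc a).ne')
  have hKL : 0 ≤ KL p fun a ↦ (c a)⁻¹ :=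
    KL_nonneg hp.1 (fun a ↦ inv_nonneg.2 (hc a).le) hc_inv (hsum.trans_eq hp.2.symm)
  calc Hsh p ≤ -∑ a, p a * logb 2 (c a)⁻¹ := by linarith [Hsh_add_KL hc_inv]
    _ = ∑ a, p a * logb 2 (c a) := by simp only [logb_inv, mul_neg, sum_neg_distrib, neg_neg]

lemma Hsh_le_of_card_div_add_card_compl_div_le (hp : IsPMF p) {S : Finset α} {x y : ℝ}
    (hx : 0 < x) (hy : 0 < y) (hxy : #S / x + #Sᶜ / y ≤ 1) :
    Hsh p ≤ (∑ a ∈ S, p a) * logb 2 x + (∑ a ∈ Sᶜ, p a) * logb 2 y := by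
  let c : α → ℝ := fun a ↦ if a ∈ S then x else y
  have hcS : ∀ a ∈ S, c a = x := fun a ha ↦ if_pos ha
  have hcSc : ∀ a ∈ Sᶜ, c a = y := fun a ha ↦ if_neg (mem_compl.1 ha)
  have hc (a : α) : 0 < c a := by
    simp only [c]
    split_ifs <;> assumption
  have hsum : ∑ a, (c a)⁻¹ = #S / x + #Sᶜ / y := by
    rw [← sum_add_sum_compl S, sum_congr rfl fun a ha ↦ congrArg _ (hcS a ha),
      sum_congr (s₁ := Sᶜ) rfl fun a ha ↦ congrArg _ (hcSc a ha)]
    simp only [sum_const, nsmul_eq_mul, div_eq_mul_inv]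
  calc Hsh p ≤ ∑ a, p a * logb 2 (c a) := hp.Hsh_le_sum_mul_logb hc (hsum.trans_le hxy)
    _ = (∑ a ∈ S, p a) * logb 2 x + (∑ a ∈ Sᶜ, p a) * logb 2 y := by
      rw [← sum_add_sum_compl S, sum_mul, sum_mul, sum_congr rfl fun a ha ↦ by rw [hcS a ha],
        sum_congr (s₁ := Sᶜ) rfl fun a ha ↦ by rw [hcSc a ha]]

lemma Hsh_le_of_card_le (hp : IsPMF p) {S : Finset α} {k : ℕ} (hk : 0 < k) (hS : #S ≤ k) :
    Hsh p ≤ 1 + logb 2 k + (∑ a ∈ Sᶜ, p a) * logb 2 (Fintype.card α) := by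
  have := hp.nonempty
  have hk₀ : (0 : ℝ) < k := by exact_mod_cast hk
  have hN : (0 : ℝ) < Fintype.card α := by exact_mod_cast Fintype.card_pos
  have hweights : #S / (2 * k : ℝ) + #Sᶜ / (2 * Fintype.card α : ℝ) ≤ 1 := by
    have hSk : (#S : ℝ) / k ≤ 1 := div_le_one_of_le₀ (by exact_mod_cast hS) hk₀.le
    have hScN : (#Sᶜ : ℝ) / Fintype.card α ≤ 1 :=
      div_le_one_of_le₀ (by exact_mod_cast card_le_univ Sᶜ) hN.le
    rw [mul_comm 2, mul_comm 2, ← div_div, ← div_div]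
    linarith
  have hentropy :=
    hp.Hsh_le_of_card_div_add_card_compl_div_le (mul_pos two_pos hk₀) (mul_pos two_pos hN) hweights
  rw [logb_mul two_ne_zero hk₀.ne', logb_mul two_ne_zero hN.ne', logb_self_eq_one one_lt_two]
    at hentropy
  have hmass : ∑ a ∈ S, p a + ∑ a ∈ Sᶜ, p a = 1 := (sum_add_sum_compl S p).trans hp.2
  have hmass_compl : 0 ≤ ∑ a ∈ Sᶜ, p a := sum_nonneg fun a _ ↦ hp.1 a
  have hlogk : 0 ≤ logb 2 k := logb_nonneg one_lt_two (by exact_mod_cast hk)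
  have hmass_mul : (∑ a ∈ S, p a) * logb 2 k ≤ logb 2 k :=
    mul_le_of_le_one_left hlogk (by linarith)
  linarith

end IsPMF

section SeededCode

variable {A B S : Type*} [Fintype A] [Fintype S] {P : A → ℝ} {Q : S → ℝ}

/-- The probability that the decoder `g` fails to recover a source symbol drawn from `P` and encoded
by `f`, where encoder and decoder share an independent seed drawn from `Q`. -/
def errorProb [DecidableEq A] (P : A → ℝ) (Q : S → ℝ) (f : A × S → B) (g : B × S → A) : ℝ :=
  ∑ a, ∑ u, P a * Q u * (if g (f (a, u), u) = a then 0 else 1)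

/-- The law of the message `f (a, u)` for a source symbol `a` drawn from `P` and an independent
seed `u` drawn from `Q`; its distance from the uniform law measures the uniformity of the code. -/
def messageLaw [DecidableEq B] (P : A → ℝ) (Q : S → ℝ) (f : A × S → B) : B → ℝ :=
  fun b ↦ ∑ a, ∑ u, P a * Q u * (if f (a, u) = b then 1 else 0)

lemma card_filter_leftInverse_le [Fintype B] [DecidableEq A] (f : A → B) (g : B → A) :
    #{a | g (f a) = a} ≤ Fintype.card B := by
  calc #{a | g (f a) = a} ≤ #(univ.image g) :=
        card_le_card fun a ha ↦ mem_image.2 ⟨f a, mem_univ _, (mem_filter.1 ha).2⟩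
    _ ≤ Fintype.card B := card_image_le

lemma IsPMF.Hsh_le_of_decoder [Fintype B] [DecidableEq A] (hP : IsPMF P) (f : A → B) (g : B → A) :
    Hsh P ≤ 1 + logb 2 (Fintype.card B) +
      (∑ a, P a * (if g (f a) = a then 0 else 1)) * logb 2 (Fintype.card A) := by
  have herr : ∑ a, P a * (if g (f a) = a then 0 else 1) =
      ∑ a ∈ ({a | g (f a) = a} : Finset A)ᶜ, P a := by
    simp only [compl_filter, sum_filter, mul_ite, mul_zero, mul_one, ite_not]
  have hB : 0 < Fintype.card B := Fintype.card_pos_iff.2 (hP.nonempty.map f)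
  rw [herr]
  convert hP.Hsh_le_of_card_le hB (card_filter_leftInverse_le f g)

lemma IsPMF.Hsh_le_of_seeded_decoder [Fintype B] [DecidableEq A] (hP : IsPMF P) (hQ : IsPMF Q)
    (f : A × S → B) (g : B × S → A) :
    Hsh P ≤ 1 + logb 2 (Fintype.card B) + errorProb P Q f g * logb 2 (Fintype.card A) := by
  have havg : errorProb P Q f g =
      ∑ u, Q u * ∑ a, P a * (if g (f (a, u), u) = a then 0 else 1) := by
    rw [errorProb, sum_comm]
    simp only [mul_sum, mul_assoc, mul_left_comm]
  calc Hsh P = ∑ u, Q u * Hsh P := by rw [← sum_mul, hQ.2, one_mul]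
    _ ≤ ∑ u, Q u * (1 + logb 2 (Fintype.card B) +
          (∑ a, P a * (if g (f (a, u), u) = a then 0 else 1)) * logb 2 (Fintype.card A)) :=
        sum_le_sum fun u _ ↦ mul_le_mul_of_nonneg_left
          (hP.Hsh_le_of_decoder (fun a ↦ f (a, u)) fun b ↦ g (b, u)) (hQ.1 u)
    _ = 1 + logb 2 (Fintype.card B) + errorProb P Q f g * logb 2 (Fintype.card A) := by
        simp only [mul_add, sum_add_distrib, ← mul_assoc, ← sum_mul, hQ.2, havg, one_mul]

lemma one_sub_VD_uniform_mul_card_le [Fintype B] {p : B → ℝ} {T : Finset B}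
    (hp : ∀ b ∉ T, p b = 0) :
    (1 - VD p fun _ ↦ 1 / (Fintype.card B : ℝ)) * Fintype.card B ≤ #T := by
  rcases isEmpty_or_nonempty B with hB | hB
  · simp
  have hcard : (0 : ℝ) < Fintype.card B := by exact_mod_cast Fintype.card_pos
  have hmissed : #Tᶜ / (Fintype.card B : ℝ) ≤ VD p fun _ ↦ 1 / (Fintype.card B : ℝ) :=
    calc #Tᶜ / (Fintype.card B : ℝ) = ∑ b ∈ Tᶜ, |p b - 1 / Fintype.card B| := by
          rw [sum_congr rfl fun b hb ↦ by rw [hp b (mem_compl.1 hb), zero_sub, abs_neg,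
            abs_of_pos (one_div_pos.2 hcard)], sum_const, nsmul_eq_mul, mul_one_div]
      _ ≤ VD p fun _ ↦ 1 / (Fintype.card B : ℝ) :=
        sum_le_univ_sum_of_nonneg fun _ ↦ abs_nonneg _
  have hcompl : (#T : ℝ) + #Tᶜ = Fintype.card B := by exact_mod_cast card_add_card_compl T
  rw [div_le_iff₀ hcard] at hmissed
  linarith

lemma one_sub_VD_messageLaw_mul_card_le [Fintype B] [DecidableEq B] (P : A → ℝ) (Q : S → ℝ)
    (f : A × S → B) :
    (1 - VD (messageLaw P Q f) fun _ ↦ 1 / (Fintype.card B : ℝ)) * Fintype.card B ≤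
      Fintype.card A * Fintype.card S := by
  have hsupp : ∀ b ∉ univ.image f, messageLaw P Q f b = 0 := fun b hb ↦
    sum_eq_zero fun a _ ↦ sum_eq_zero fun u _ ↦ by
      rw [if_neg fun h ↦ hb (mem_image.2 ⟨(a, u), mem_univ _, h⟩), mul_zero]
  calc _ ≤ (#(univ.image f) : ℝ) := one_sub_VD_uniform_mul_card_le hsupp
    _ ≤ Fintype.card A * Fintype.card S := by
      rw [← Nat.cast_mul, ← Fintype.card_prod]
      exact_mod_cast card_image_le

lemma logb_card_le_of_VD_messageLaw_le [Fintype B] [DecidableEq B] [Nonempty A] [Nonempty S]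
    (f : A × S → B) (hf : VD (messageLaw P Q f) (fun _ ↦ 1 / (Fintype.card B : ℝ)) ≤ 1 / 2) :
    logb 2 (Fintype.card B) ≤ 1 + logb 2 (Fintype.card A) + logb 2 (Fintype.card S) := by
  have hA : (0 : ℝ) < Fintype.card A := by exact_mod_cast Fintype.card_pos
  have hS : (0 : ℝ) < Fintype.card S := by exact_mod_cast Fintype.card_pos
  have hB : (0 : ℝ) < Fintype.card B := by
    exact_mod_cast Fintype.card_pos_iff.2 (Nonempty.map f inferInstance)
  have hB_le : (Fintype.card B : ℝ) ≤ 2 * Fintype.card A * Fintype.card S := by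
    nlinarith [one_sub_VD_messageLaw_mul_card_le P Q f]
  calc logb 2 (Fintype.card B) ≤ logb 2 (2 * Fintype.card A * Fintype.card S) :=
        logb_le_logb_of_le one_lt_two hB hB_le
    _ = 1 + logb 2 (Fintype.card A) + logb 2 (Fintype.card S) := by
      rw [logb_mul (by positivity) hS.ne', logb_mul two_ne_zero hA.ne',
        logb_self_eq_one one_lt_two]

end SeededCode

section BlockCode

variable {X : Type*} [Fintype X]

lemma IsPMF.Hsh_le_rate_add {S B : Type*} [Fintype S] [Fintype B] {p : X → ℝ} {Q : S → ℝ}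
    (hp : IsPMF p) (hQ : IsPMF Q) {n : ℕ} (hn : n ≠ 0) (f : (Fin n → X) × S → B)
    (g : B × S → (Fin n → X)) :
    Hsh p ≤ 1 / n + logb 2 (Fintype.card B) / n +
      errorProb (iid p n) Q f g * logb 2 (Fintype.card X) := by
  have hn₀ : (0 : ℝ) < n := by exact_mod_cast hn.bot_lt
  have hblock := (hp.isPMF_iid n).Hsh_le_of_seeded_decoder hQ f g
  rw [hp.Hsh_iid, Fintype.card_fun, Fintype.card_fin, Nat.cast_pow, logb_pow] at hblock
  have hrhs : 1 / n + logb 2 (Fintype.card B) / n +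
      errorProb (iid p n) Q f g * logb 2 (Fintype.card X) =
      (1 + logb 2 (Fintype.card B) +
        errorProb (iid p n) Q f g * (n * logb 2 (Fintype.card X))) / n := by
    field_simp
  rwa [hrhs, le_div_iff₀' hn₀]

lemma isBoundedUnder_rate [Nonempty X] {M d : ℕ → ℕ} {P : ∀ n, (Fin n → X) → ℝ}
    {Q : ∀ n, Fin (2 ^ d n) → ℝ} (φ : ∀ n, (Fin n → X) × Fin (2 ^ d n) → Fin (M n))
    (hd : IsBoundedUnder (· ≤ ·) atTop fun n ↦ (d n : ℝ) / n)
    (hφ : ∀ᶠ n in atTop, VD (messageLaw (P n) (Q n) (φ n)) (fun _ ↦ 1 / (M n : ℝ)) ≤ 1 / 2) :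
    IsBoundedUnder (· ≤ ·) atTop fun n ↦ logb 2 (M n) / n := by
  obtain ⟨C, hC⟩ := hd
  refine ⟨1 + logb 2 (Fintype.card X) + C, eventually_map.2 ?_⟩
  filter_upwards [eventually_map.1 hC, hφ, eventually_ge_atTop 1] with n hdn hφn hn
  have hn₁ : (1 : ℝ) ≤ n := by exact_mod_cast hn
  have hn₀ := one_pos.trans_le hn₁
  have hlogb : logb 2 (M n) ≤ 1 + n * logb 2 (Fintype.card X) + d n := by
    simpa [logb_pow] using
      logb_card_le_of_VD_messageLaw_le (φ n) (by simpa only [Fintype.card_fin] using hφn)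
  rw [div_le_iff₀ hn₀] at hdn ⊢
  linarith

theorem statement7_general {p : X → ℝ} (hp : IsPMF p) {R : ℝ} {M : ℕ → ℕ} {S : ℕ → Type*}
    [∀ n, Fintype (S n)] {Q : ∀ n, S n → ℝ} (hQ : ∀ n, IsPMF (Q n))
    {φ : ∀ n, (Fin n → X) × S n → Fin (M n)} {ψ : ∀ n, Fin (M n) × S n → (Fin n → X)}
    (hbdd : IsBoundedUnder (· ≤ ·) atTop fun n ↦ logb 2 (M n) / n)
    (hrate : limsup (fun n ↦ logb 2 (M n) / n) atTop ≤ R)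
    (hPe : Tendsto (fun n ↦ errorProb (iid p n) (Q n) (φ n) (ψ n)) atTop (nhds 0)) :
    Hsh p ≤ R := by
  let lower : ℕ → ℝ := fun n ↦
    Hsh p - 1 / n - errorProb (iid p n) (Q n) (φ n) (ψ n) * logb 2 (Fintype.card X)
  have hlower : Tendsto lower atTop (nhds (Hsh p)) := by
    simpa [lower] using (tendsto_const_nhds.sub tendsto_one_div_atTop_nhds_zero_nat).sub
      (hPe.mul_const (logb 2 (Fintype.card X)))
  have hle : ∀ᶠ n in atTop, lower n ≤ logb 2 (M n) / n := by
    filter_upwards [eventually_ne_atTop 0] with n hn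
    have hHsh := hp.Hsh_le_rate_add (hQ n) hn (φ n) (ψ n)
    rw [Fintype.card_fin] at hHsh
    simp only [lower]
    linarith
  calc Hsh p = limsup lower atTop := hlower.limsup_eq.symm
    _ ≤ limsup (fun n ↦ logb 2 (M n) / n) atTop :=
      limsup_le_limsup hle hlower.isCoboundedUnder_le hbdd
    _ ≤ R := hrate

end BlockCode

/-- rate converse of Proposition 2: any rate achievable with uniform
compression codes is at least `H(X)`. -/
theorem statement7 {X : Type*} [Fintype X] (pX : X → ℝ) (hX : IsPMF pX)
    (R : ℝ) (M d : ℕ → ℕ)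
    (φ : (n : ℕ) → (Fin n → X) × Fin (2 ^ d n) → Fin (M n))
    (ψ : (n : ℕ) → Fin (M n) × Fin (2 ^ d n) → (Fin n → X))
    -- `limsup (1/n) log M_n ≤ R`
    (hrate : Filter.limsup (fun (n : ℕ) => Real.logb 2 (M n) / n) atTop ≤ R)
    -- `d_n / n → 0`
    (hd : Tendsto (fun (n : ℕ) => (d n : ℝ) / n) atTop (nhds 0))
    -- `P_e(φ_n, ψ_n) → 0`
    (hPe : Tendsto (fun (n : ℕ) =>
        ∑ x : Fin n → X, ∑ u : Fin (2 ^ d n),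
          iid pX n x * (1 / (2:ℝ) ^ d n) * (if ψ n (φ n (x, u), u) = x then 0 else 1))
      atTop (nhds 0))
    -- `U_e(φ_n) → 0`
    (hUe : Tendsto (fun (n : ℕ) =>
        VD (fun m : Fin (M n) =>
              ∑ x : Fin n → X, ∑ u : Fin (2 ^ d n),
                iid pX n x * (1 / (2:ℝ) ^ d n) * (if φ n (x, u) = m then 1 else 0))
           (fun _ => 1 / (M n : ℝ)))
      atTop (nhds 0)) :
    Hsh pX ≤ R := by
  have := hX.nonempty
  exact statement7_general hX (fun n ↦ by simpa using isPMF_uniform (α := Fin (2 ^ d n)))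
    (isBoundedUnder_rate φ hd.isBoundedUnder_le (hUe.eventually_le_const one_half_pos)) hrate hPe
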